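/- Let β > 0 and let γ_param : ℤ → ℝ be even with Σ_{h∈ℤ} |γ_param(h)| < ∞ and spectral density f_param(λ) := (1/(2π)) Σ_{h∈ℤ} γ_param(h) e^{−ihλ} satisfying f_param(λ) ≥ β for all λ. Let f : [0,2π] → (0,∞) be bounded. For each n ≥ 1 let P_{param,n} := N_n(0, Γ_n(γ_param)) (the Gaussian parametric working model) and let P^C_n be the pushforward of P_{param,n} under the linear map z ↦ F_n^T C_n^{1/2} F_n z with C_n := C_n(f, f_param) (so that P^C_n is the law of the nonparametrically corrected likelihood). Then the periodogram is asymptotically unbiased for f under the corrected likelihood, uniformly over the Fourier frequencies: max_{0 ≤ j ≤ ⌊n/2⌋} | ∫_{ℝ^n} I_{n,λ_j}(z) dP^C_n(z) − f(λ_j) | → 0 as n → ∞; moreover, for every n and every 0 ≤ j ≤ ⌊n/2⌋, the exact identity ∫ I_{n,λ_j} dP^C_n = (f(λ_j)/f_param(λ_j)) ∫ I_{n,λ_j} dP_{param,n} holds. -/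

import Mathlib

open MeasureTheory Matrix Filter

/-- The `j`-th Fourier frequency `λ_j = 2πj/n`. -/
noncomputable def fourierFreq (n j : ℕ) : ℝ := 2 * Real.pi * j / n

/-- The periodogram `I_{n,λ}(z) = (2πn)⁻¹ |∑_{t=1}^n z_t e^{-itλ}|²`. -/
noncomputable def periodogram (n : ℕ) (lam : ℝ) (z : Fin n → ℝ) : ℝ :=
  1 / (2 * Real.pi * n) *
    Complex.normSq (∑ t : Fin n, (z t : ℂ) *
      Complex.exp (-Complex.I * (((t : ℕ) + 1 : ℕ) : ℂ) * (lam : ℂ)))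

/-- The real orthogonal Fourier transform matrix `F_n` with rows
`e_0, c_1, s_1, …, c_N, s_N` (and additionally `e_{n/2}` as last row for `n` even). -/
noncomputable def Fmat (n : ℕ) : Matrix (Fin n) (Fin n) ℝ :=
  Matrix.of fun r t : Fin n =>
    if r.val = 0 then 1 / Real.sqrt n
    else if n % 2 = 0 ∧ r.val = n - 1 then (-1 : ℝ) ^ ((t : ℕ) + 1) / Real.sqrt n
    else if r.val % 2 = 1 then
      Real.sqrt 2 / Real.sqrt n *
        Real.cos (2 * Real.pi * (((r.val + 1) / 2 : ℕ) : ℝ) * (((t : ℕ) + 1 : ℕ) : ℝ) / n)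
    else
      -(Real.sqrt 2 / Real.sqrt n) *
        Real.sin (2 * Real.pi * ((r.val / 2 : ℕ) : ℝ) * (((t : ℕ) + 1 : ℕ) : ℝ) / n)

/-- The diagonal matrix `D_n(f)` with entries `2πf(λ_0), 2πf(λ_1), 2πf(λ_1), …`
matching the row ordering of `F_n`. -/
noncomputable def Dmat (n : ℕ) (f : ℝ → ℝ) : Matrix (Fin n) (Fin n) ℝ :=
  Matrix.diagonal fun r : Fin n => 2 * Real.pi * f (fourierFreq n ((r.val + 1) / 2))

/-- The diagonal correction matrix `C_n(f, f_param)` with entries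
`c(λ_0), c(λ_1), c(λ_1), …` where `c = f/f_param`, matching the row ordering of `F_n`. -/
noncomputable def Cmat (n : ℕ) (f fp : ℝ → ℝ) : Matrix (Fin n) (Fin n) ℝ :=
  Matrix.diagonal fun r : Fin n =>
    f (fourierFreq n ((r.val + 1) / 2)) / fp (fourierFreq n ((r.val + 1) / 2))

/-- Entrywise real power of the diagonal of a matrix: for a diagonal matrix `A` with
positive entries, `diagRPow n A (-(1/2))` is `A^{-1/2}` etc. -/
noncomputable def diagRPow (n : ℕ) (A : Matrix (Fin n) (Fin n) ℝ) (p : ℝ) :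
    Matrix (Fin n) (Fin n) ℝ :=
  Matrix.diagonal fun i => A i i ^ p

/-- The spectral density `f(λ) = (2π)⁻¹ ∑_{h∈ℤ} γ(h) e^{-ihλ}` of an even, absolutely
summable autocovariance function `γ` (real-valued since `γ` is even). -/
noncomputable def specDens (γ : ℤ → ℝ) (lam : ℝ) : ℝ :=
  1 / (2 * Real.pi) * ∑' h : ℤ, γ h * Real.cos (h * lam)

/-- The `n × n` Toeplitz autocovariance matrix `Γ_n(γ)` with entries `γ(s - t)`. -/
noncomputable def Toeplitz (n : ℕ) (γ : ℤ → ℝ) : Matrix (Fin n) (Fin n) ℝ :=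
  Matrix.of fun s t : Fin n => γ ((s : ℤ) - (t : ℤ))

open scoped Classical in
/-- The positive semidefinite square root of a positive semidefinite matrix
(junk value `0` if the matrix is not positive semidefinite). -/
noncomputable def matSqrt {n : ℕ} (S : Matrix (Fin n) (Fin n) ℝ) :
    Matrix (Fin n) (Fin n) ℝ :=
  if h : S.PosSemidef then
    (h.1.eigenvectorUnitary : Matrix (Fin n) (Fin n) ℝ) *
      Matrix.diagonal (Real.sqrt ∘ h.1.eigenvalues) *
      (star h.1.eigenvectorUnitary : Matrix (Fin n) (Fin n) ℝ)
  else 0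

/-- The centered Gaussian distribution `N_n(0, S)` on `ℝⁿ`: the pushforward of the
`n`-fold product of standard normals under `w ↦ S^{1/2} w`. -/
noncomputable def gaussianVec (n : ℕ) (S : Matrix (Fin n) (Fin n) ℝ) :
    MeasureTheory.Measure (Fin n → ℝ) :=
  MeasureTheory.Measure.map (fun w => (matSqrt S).mulVec w)
    (MeasureTheory.Measure.pi fun _ : Fin n => ProbabilityTheory.gaussianReal 0 1)

/-!
Each row of the orthogonal matrix `F_n` is a cosine wave of some Fourier frequency `λ_j` with phase
`0` or `π / 2`, so the correction `F_nᵀ C_n^{1/2} F_n` multiplies the two coefficients of `z` that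
make up its periodogram at `λ_j` by `√c(λ_j)`, where `c = f / f_param`. This gives the exact
identity for the expectations.

Under the Gaussian working model the expected periodogram at `λ` is the Cesàro mean of the Fourier
partial sums of `f_param` at `λ`. Up to the factor `1 / (2π)`, its bias is therefore bounded,
uniformly in `λ`, by the Cesàro mean of the tails of `∑ |γ_param h|`, which tends to `0`. Since `c`
is bounded by `sup f / β`, the corrected bias tends to `0` uniformly as well.
-/

open Finset in
lemma sum_Icc_neg_self {M : Type*} [AddCommMonoid M] (g : ℤ → M) (n : ℕ) :
    ∑ h ∈ Icc (-n : ℤ) n, g h =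
      ∑ s ∈ range n, g (s - n) + ∑ t ∈ range n, g (n - t) + g 0 := by
  induction n with
  | zero => simp
  | succ n ih =>
    rw [Nat.cast_succ, Icc_succ_succ, sum_union (by simp), sum_pair (by omega), ih,
      sum_range_succ', sum_range_succ']
    simp only [Nat.cast_succ, add_sub_add_right_eq_sub, Nat.cast_zero, zero_sub, sub_zero]
    abel

open Finset in
lemma sum_range_sum_range_sub {M : Type*} [AddCommMonoid M] (g : ℤ → M) (n : ℕ) :
    ∑ s ∈ range n, ∑ t ∈ range n, g (s - t) = ∑ k ∈ range n, ∑ h ∈ Icc (-k : ℤ) k, g h := by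
  induction n with
  | zero => simp
  | succ n ih =>
    simp only [sum_range_succ, sum_add_distrib, sub_self, sum_Icc_neg_self] at ih ⊢
    rw [ih]
    abel

lemma norm_tsum_sub_sum_le {ι E : Type*} [NormedAddCommGroup E] [CompleteSpace E]
    {f : ι → E} {b : ι → ℝ} (hb : Summable b) (hfb : ∀ i, ‖f i‖ ≤ b i) (s : Finset ι) :
    ‖∑' i, f i - ∑ i ∈ s, f i‖ ≤ ∑' i, b i - ∑ i ∈ s, b i := by
  have hf : Summable f := .of_norm_bounded hb hfb
  rw [← hf.sum_add_tsum_subtype_compl s, ← hb.sum_add_tsum_subtype_compl s, add_sub_cancel_left,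
    add_sub_cancel_left]
  exact tsum_of_norm_bounded (hb.subtype _).hasSum fun i => hfb i

/-- The Cesàro mean of the first `n` tails `∑_{|h| > k} b h`, which bounds the Fejér-type error
`(1 / n) ∑_{s, t} g (s - t) - ∑_h g h` whenever `‖g h‖ ≤ b h`. -/
noncomputable def cesaroTail (b : ℤ → ℝ) (n : ℕ) : ℝ :=
  (n : ℝ)⁻¹ * ∑ k ∈ Finset.range n, (∑' h, b h - ∑ h ∈ Finset.Icc (-k : ℤ) k, b h)

lemma tendsto_cesaroTail {b : ℤ → ℝ} (hb : Summable b) :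
    Tendsto (cesaroTail b) atTop (nhds 0) := by
  have hpartial : Tendsto (fun k : ℕ => ∑' h, b h - ∑ h ∈ Finset.Icc (-k : ℤ) k, b h)
      atTop (nhds (∑' h, b h - ∑' h, b h)) :=
    (hb.hasSum.comp Finset.tendsto_Icc_neg).const_sub _
  rw [sub_self] at hpartial
  exact hpartial.cesaro

lemma norm_inv_smul_sum_sum_sub_tsum_le {E : Type*} [NormedAddCommGroup E] [NormedSpace ℝ E]
    [CompleteSpace E] {g : ℤ → E} {b : ℤ → ℝ} (hb : Summable b) (hgb : ∀ h, ‖g h‖ ≤ b h)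
    {n : ℕ} (hn : n ≠ 0) :
    ‖(n : ℝ)⁻¹ • ∑ s : Fin n, ∑ t : Fin n, g ((s : ℤ) - t) - ∑' h, g h‖ ≤ cesaroTail b n := by
  have hdiff : (n : ℝ)⁻¹ • ∑ s : Fin n, ∑ t : Fin n, g ((s : ℤ) - t) - ∑' h, g h =
      -((n : ℝ)⁻¹ • ∑ k ∈ Finset.range n, (∑' h, g h - ∑ h ∈ Finset.Icc (-k : ℤ) k, g h)) := by
    rw [Finset.sum_sub_distrib, ← sum_range_sum_range_sub, Finset.sum_const, Finset.card_range,
      ← Nat.cast_smul_eq_nsmul ℝ, smul_sub]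
    simp only [Finset.sum_range]
    rw [inv_smul_smul₀ (Nat.cast_ne_zero.2 hn), neg_sub]
  rw [hdiff, norm_neg, norm_smul, norm_inv, Real.norm_natCast, cesaroTail]
  gcongr
  exact norm_sum_le_of_le _ fun k _ => norm_tsum_sub_sum_le hb hgb _

section SpectralDensity

open scoped Real

lemma integral_cos_int_mul (m : ℤ) :
    ∫ x in (0 : ℝ)..(2 * π), Real.cos (m * x) = if m = 0 then 2 * π else 0 := by
  split_ifs with hm
  · simp [hm]
  · have hend : Real.sin (m * (2 * π)) = 0 := by
      simpa using Real.sin_add_int_mul_two_pi 0 m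
    rw [intervalIntegral.integral_comp_mul_left Real.cos (Int.cast_ne_zero.2 hm), integral_cos,
      hend, mul_zero, Real.sin_zero, sub_zero, smul_zero]

lemma integral_cos_mul_cos_int (h k : ℤ) :
    ∫ x in (0 : ℝ)..(2 * π), Real.cos (h * x) * Real.cos (k * x) =
      (if h = k then π else 0) + if h = -k then π else 0 := by
  have hprod (x : ℝ) : Real.cos (h * x) * Real.cos (k * x) =
      (Real.cos ((h - k : ℤ) * x) + Real.cos ((h + k : ℤ) * x)) / 2 := by
    rw [eq_div_iff two_ne_zero, mul_comm _ (2 : ℝ), ← mul_assoc, Real.two_mul_cos_mul_cos]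
    push_cast
    ring_nf
  simp only [hprod]
  rw [intervalIntegral.integral_div, intervalIntegral.integral_add
    (Continuous.intervalIntegrable (by fun_prop) _ _)
    (Continuous.intervalIntegrable (by fun_prop) _ _), integral_cos_int_mul, integral_cos_int_mul]
  simp only [sub_eq_zero, add_eq_zero_iff_eq_neg]
  split_ifs <;> ring

lemma norm_mul_cos_le (a x : ℝ) : ‖a * Real.cos x‖ ≤ |a| := by
  rw [norm_mul, Real.norm_eq_abs]
  exact mul_le_of_le_one_right (abs_nonneg a) (Real.abs_cos_le_one x)

lemma continuous_specDens {γ : ℤ → ℝ} (hγ : Summable fun h => |γ h|) :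
    Continuous (specDens γ) :=
  continuous_const.mul <|
    continuous_tsum (fun h => by fun_prop) hγ fun h x => norm_mul_cos_le (γ h) (h * x)

lemma integral_specDens_mul_cos {γ : ℤ → ℝ} (hγ : Summable fun h => |γ h|) (k : ℤ) :
    ∫ x in (0 : ℝ)..(2 * π), specDens γ x * Real.cos (k * x) = (γ k + γ (-k)) / 2 := by
  have hsum : HasSum
      (fun h : ℤ => ∫ x in (0 : ℝ)..(2 * π), γ h * Real.cos (h * x) * Real.cos (k * x))
      (∫ x in (0 : ℝ)..(2 * π), (∑' h : ℤ, γ h * Real.cos (h * x)) * Real.cos (k * x)) := by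
    refine intervalIntegral.hasSum_integral_of_dominated_convergence (fun h _ => |γ h|)
      (fun h => Continuous.aestronglyMeasurable (by fun_prop)) (fun h => .of_forall fun x _ => ?_)
      (.of_forall fun _ _ => hγ) intervalIntegrable_const (.of_forall fun x _ => ?_)
    · exact (norm_mul_cos_le _ _).trans (norm_mul_cos_le _ _)
    · exact (Summable.of_norm_bounded hγ fun h => norm_mul_cos_le _ _).hasSum.mul_right _
  have hterm (h : ℤ) :
      ∫ x in (0 : ℝ)..(2 * π), γ h * Real.cos (h * x) * Real.cos (k * x) =
        (if h = k then γ k * π else 0) + if h = -k then γ (-k) * π else 0 := by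
    simp only [mul_assoc]
    rw [intervalIntegral.integral_const_mul, integral_cos_mul_cos_int, mul_add]
    split_ifs <;> simp_all
  simp only [hterm] at hsum
  have hval := hsum.unique
    ((hasSum_ite_eq k (γ k * π)).add (hasSum_ite_eq (-k) (γ (-k) * π)))
  simp only [specDens, mul_assoc]
  rw [intervalIntegral.integral_const_mul, hval]
  field_simp

end SpectralDensity

section Periodogram

open scoped Real

/-- The sampled cosine wave of frequency `lam` and phase `φ`; the phase `π / 2` gives `-sin`. -/
noncomputable def cosWave (n : ℕ) (lam φ : ℝ) : Fin n → ℝ :=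
  fun t => Real.cos (((t : ℕ) + 1) * lam + φ)

lemma periodogram_eq_sq_add_sq (n : ℕ) (lam : ℝ) (z : Fin n → ℝ) :
    periodogram n lam z = 1 / (2 * π * n) *
      ((cosWave n lam 0 ⬝ᵥ z) ^ 2 + (cosWave n lam (π / 2) ⬝ᵥ z) ^ 2) := by
  have hphase (t : Fin n) : Complex.exp (-Complex.I * (((t : ℕ) + 1 : ℕ) : ℂ) * (lam : ℂ)) =
      Complex.exp ((-(((t : ℕ) + 1) * lam) : ℝ) * Complex.I) := by
    congr 1
    push_cast
    ring
  rw [periodogram, Complex.normSq_apply, Complex.re_sum, Complex.im_sum]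
  simp only [hphase, Complex.re_ofReal_mul, Complex.im_ofReal_mul, Complex.exp_ofReal_mul_I_re,
    Complex.exp_ofReal_mul_I_im, Real.cos_neg, Real.sin_neg, dotProduct, cosWave, add_zero,
    Real.cos_add_pi_div_two, mul_comm (z _), sq]

lemma periodogram_eq_sum_cos (n : ℕ) (lam : ℝ) (z : Fin n → ℝ) :
    periodogram n lam z = 1 / (2 * π * n) *
      ∑ s : Fin n, ∑ t : Fin n, z s * z t * Real.cos (((s - t : ℤ) : ℝ) * lam) := by
  have hcos (s t : Fin n) : Real.cos (((s - t : ℤ) : ℝ) * lam) =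
      cosWave n lam 0 s * cosWave n lam 0 t +
        cosWave n lam (π / 2) s * cosWave n lam (π / 2) t := by
    simp only [cosWave, add_zero, Real.cos_add_pi_div_two, neg_mul_neg]
    rw [← Real.cos_sub]
    congr 1
    push_cast
    ring
  rw [periodogram_eq_sq_add_sq, sq, sq, dotProduct, dotProduct, Finset.sum_mul_sum,
    Finset.sum_mul_sum, ← Finset.sum_add_distrib]
  simp only [← Finset.sum_add_distrib, hcos]
  congr! 3
  ring

lemma continuous_periodogram (n : ℕ) (lam : ℝ) : Continuous (periodogram n lam) := by
  simp only [funext (periodogram_eq_sum_cos n lam)]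
  fun_prop

lemma periodogram_nonneg (n : ℕ) (lam : ℝ) (z : Fin n → ℝ) : 0 ≤ periodogram n lam z :=
  mul_nonneg (by positivity) (Complex.normSq_nonneg _)

lemma dotProduct_Toeplitz_mulVec {γ : ℤ → ℝ} (hγ : Summable fun h => |γ h|)
    (heven : ∀ h, γ (-h) = γ h) {n : ℕ} (v : Fin n → ℝ) :
    v ⬝ᵥ Toeplitz n γ *ᵥ v =
      ∫ x in (0 : ℝ)..(2 * π), specDens γ x * (2 * π * n * periodogram n x v) := by
  rcases eq_or_ne n 0 with rfl | hn
  · simp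
  have hcont := continuous_specDens hγ
  have hintegrand (x : ℝ) : specDens γ x * (2 * π * n * periodogram n x v) =
      ∑ s : Fin n, ∑ t : Fin n,
        v s * v t * (specDens γ x * Real.cos (((s - t : ℤ) : ℝ) * x)) := by
    rw [periodogram_eq_sum_cos, ← mul_assoc (2 * π * n),
      mul_one_div_cancel (by positivity), one_mul]
    simp only [Finset.mul_sum, mul_left_comm]
  simp only [hintegrand]
  rw [intervalIntegral.integral_finsetSum
    fun s _ => Continuous.intervalIntegrable (by fun_prop) _ _]
  simp only [dotProduct, mulVec, Finset.mul_sum]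
  refine Finset.sum_congr rfl fun s _ => ?_
  rw [intervalIntegral.integral_finsetSum
    fun t _ => Continuous.intervalIntegrable (by fun_prop) _ _]
  refine Finset.sum_congr rfl fun t _ => ?_
  rw [intervalIntegral.integral_const_mul, integral_specDens_mul_cos hγ, heven, Toeplitz,
    Matrix.of_apply]
  ring

lemma posSemidef_Toeplitz {γ : ℤ → ℝ} (hγ : Summable fun h => |γ h|)
    (heven : ∀ h, γ (-h) = γ h) (hpos : ∀ x, 0 ≤ specDens γ x) (n : ℕ) :
    (Toeplitz n γ).PosSemidef := by
  refine .of_dotProduct_mulVec_nonneg ?_ fun v => ?_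
  · ext s t
    simp [Toeplitz, ← heven (s - t)]
  · rw [star_trivial, dotProduct_Toeplitz_mulVec hγ heven]
    exact intervalIntegral.integral_nonneg (by positivity) fun x _ =>
      mul_nonneg (hpos x) (mul_nonneg (by positivity) (periodogram_nonneg n x v))

end Periodogram

section FourierMatrix

open scoped Real

lemma sum_zpow_pow_of_isPrimitiveRoot {K : Type*} [Field K] {ζ : K} {n : ℕ}
    (hζ : IsPrimitiveRoot ζ n) (m : ℤ) :
    ∑ t ∈ Finset.range n, (ζ ^ m) ^ t = if (n : ℤ) ∣ m then (n : K) else 0 := by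
  have hpow : (ζ ^ m) ^ n = 1 := by
    rw [← zpow_natCast, zpow_comm, zpow_natCast, hζ.pow_eq_one, _root_.one_zpow]
  split_ifs with hm
  · simp [(hζ.zpow_eq_one_iff_dvd m).2 hm]
  · have hne : ζ ^ m ≠ 1 := mt (hζ.zpow_eq_one_iff_dvd m).1 hm
    rw [geom_sum_eq hne, hpow, sub_self, zero_div]

lemma sum_cos_mul_two_pi_mul_div_add (n : ℕ) (m : ℤ) (φ : ℝ) :
    ∑ t : Fin n, Real.cos (((t : ℕ) + 1) * (2 * π * m / n) + φ) =
      if (n : ℤ) ∣ m then n * Real.cos φ else 0 := by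
  rcases eq_or_ne n 0 with rfl | hn
  · simp
  have hroot := Complex.isPrimitiveRoot_exp n hn
  set ω := Complex.exp (2 * π * Complex.I / n) with hω
  have hterm (t : Fin n) : Real.cos (((t : ℕ) + 1) * (2 * π * m / n) + φ) =
      (Complex.exp (φ * Complex.I) * ω ^ m * (ω ^ m) ^ (t : ℕ)).re := by
    rw [mul_assoc (Complex.exp _), ← pow_succ', hω, ← Complex.exp_int_mul, ← Complex.exp_nat_mul,
      ← Complex.exp_add, ← Complex.exp_ofReal_mul_I_re]
    congr 2
    push_cast
    ring
  simp only [hterm]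
  rw [← Complex.re_sum, ← Finset.mul_sum,
    Fin.sum_univ_eq_sum_range (fun t => (ω ^ m) ^ t), sum_zpow_pow_of_isPrimitiveRoot hroot]
  split_ifs with hm
  · rw [(hroot.zpow_eq_one_iff_dvd m).2 hm, mul_one, ← Complex.ofReal_natCast,
      Complex.re_mul_ofReal, Complex.exp_ofReal_mul_I_re, mul_comm]
  · simp

lemma natCast_dvd_sub_iff {n k l : ℕ} (hk : k ≤ n / 2) (hl : l ≤ n / 2) :
    (n : ℤ) ∣ k - l ↔ k = l := by
  refine ⟨fun h => ?_, by rintro rfl; simp⟩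
  rcases n.eq_zero_or_pos with rfl | hn
  · omega
  · have hsub := Int.eq_zero_of_abs_lt_dvd h (by rw [abs_lt]; omega)
    omega

lemma natCast_dvd_add_iff {n k l : ℕ} (hk : k ≤ n / 2) (hl : l ≤ n / 2) :
    (n : ℤ) ∣ k + l ↔ k + l = 0 ∨ k + l = n := by
  norm_cast
  refine ⟨fun h => ?_, by rintro (h | h) <;> simp [h]⟩
  rcases Nat.eq_zero_or_pos (k + l) with h0 | hpos
  · exact .inl h0
  · have hle := Nat.le_of_dvd hpos h
    omega

lemma cosWave_dotProduct_cosWave {n k l : ℕ} (hk : k ≤ n / 2) (hl : l ≤ n / 2) (φ ψ : ℝ) :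
    cosWave n (fourierFreq n k) φ ⬝ᵥ cosWave n (fourierFreq n l) ψ =
      n / 2 * ((if k = l then Real.cos (φ - ψ) else 0) +
        if k + l = 0 ∨ k + l = n then Real.cos (φ + ψ) else 0) := by
  have hprod (t : Fin n) :
      cosWave n (fourierFreq n k) φ t * cosWave n (fourierFreq n l) ψ t =
        (Real.cos (((t : ℕ) + 1) * (2 * π * (k - l : ℤ) / n) + (φ - ψ)) +
          Real.cos (((t : ℕ) + 1) * (2 * π * (k + l : ℤ) / n) + (φ + ψ))) / 2 := by
    rw [eq_div_iff two_ne_zero, mul_comm _ (2 : ℝ), ← mul_assoc, cosWave, cosWave,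
      Real.two_mul_cos_mul_cos, fourierFreq, fourierFreq]
    congr 2 <;> push_cast <;> ring
  rw [dotProduct, Finset.sum_congr rfl fun t _ => hprod t, ← Finset.sum_div,
    Finset.sum_add_distrib, sum_cos_mul_two_pi_mul_div_add,
    sum_cos_mul_two_pi_mul_div_add]
  simp only [natCast_dvd_sub_iff hk hl, natCast_dvd_add_iff hk hl]
  split_ifs <;> ring

/-- The phase of the cosine wave in row `r` of `F_n` (rows are numbered from `0`): `c_j` is row
`2j - 1` and has phase `0`, while `s_j` is row `2j` and has phase `π / 2`. -/
noncomputable def rowPhase (r : ℕ) : ℝ := if r = 0 ∨ r % 2 = 1 then 0 else π / 2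

/-- The amplitude of the cosine wave in row `r` of `F_n`; the first row `e_0` and, for even `n`, the
last row `e_{n/2}` are unit vectors without the factor `√2`. -/
noncomputable def rowAmp (n r : ℕ) : ℝ :=
  if r = 0 ∨ r + 1 = n ∧ n % 2 = 0 then 1 / √n else √2 / √n

lemma cosWave_nyquist {n j : ℕ} (hj : j + j = n) (φ : ℝ) (t : Fin n) :
    cosWave n (fourierFreq n j) φ t = (-1) ^ ((t : ℕ) + 1) * Real.cos φ := by
  have hn : (n : ℝ) = 2 * j := by rw [← hj]; push_cast; ring
  have hj0 : (j : ℝ) ≠ 0 := Nat.cast_ne_zero.2 (by have := t.isLt; omega)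
  have hfreq : fourierFreq n j = π := by rw [fourierFreq, hn]; field_simp
  rw [cosWave, hfreq, add_comm, ← Nat.cast_add_one, Real.cos_add_nat_mul_pi]

lemma Fmat_row {n : ℕ} (r : Fin n) :
    Fmat n r = rowAmp n r • cosWave n (fourierFreq n ((r + 1) / 2)) (rowPhase r) := by
  ext t
  have hr := r.isLt
  rw [Pi.smul_apply, smul_eq_mul]
  simp only [Fmat, Matrix.of_apply]
  split_ifs with h0 hlast hodd
  · simp [rowAmp, rowPhase, cosWave, fourierFreq, h0]
  · rw [cosWave_nyquist (by omega), rowAmp, rowPhase, if_pos (by omega), if_pos (by omega),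
      Real.cos_zero]
    ring
  · rw [rowAmp, rowPhase, cosWave, fourierFreq, if_neg (by omega), if_pos (by omega), add_zero]
    push_cast
    ring_nf
  · rw [rowAmp, rowPhase, cosWave, fourierFreq, if_neg (by omega), if_neg (by omega),
      Real.cos_add_pi_div_two, show (r.val + 1) / 2 = r.val / 2 by omega]
    push_cast
    ring_nf

lemma rowAmp_sq (n r : ℕ) :
    rowAmp n r ^ 2 = if r = 0 ∨ r + 1 = n ∧ n % 2 = 0 then 1 / (n : ℝ) else 2 / n := by
  rw [rowAmp]
  split_ifs <;> simp [div_pow]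

lemma cos_rowPhase_sub_rowPhase {r s : ℕ} (hne : r ≠ s) (hfreq : (r + 1) / 2 = (s + 1) / 2) :
    Real.cos (rowPhase r - rowPhase s) = 0 := by
  rw [rowPhase, rowPhase]
  split_ifs
  · omega
  · simp
  · simp
  · omega

lemma Fmat_mul_transpose (n : ℕ) : Fmat n * (Fmat n)ᵀ = 1 := by
  ext r s
  have hr := r.isLt
  have hs := s.isLt
  have hn : (n : ℝ) ≠ 0 := Nat.cast_ne_zero.2 (by omega)
  have hentry : (Fmat n * (Fmat n)ᵀ) r s = Fmat n r ⬝ᵥ Fmat n s := rfl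
  rw [hentry, Fmat_row, Fmat_row, smul_dotProduct, dotProduct_smul,
    cosWave_dotProduct_cosWave (by omega) (by omega), smul_eq_mul, smul_eq_mul]
  rcases eq_or_ne r s with rfl | hne
  · rw [Matrix.one_apply_eq, ← mul_assoc, ← sq, rowAmp_sq, if_pos rfl, sub_self, Real.cos_zero]
    split_ifs
    · rw [rowPhase, if_pos (by omega), add_zero, Real.cos_zero]
      field_simp
      norm_num
    · omega
    · omega
    · field_simp
      norm_num
  · have hne' : r.val ≠ s.val := Fin.val_ne_of_ne hne
    rw [Matrix.one_apply_ne hne, if_neg (by omega : ¬(_ ∨ _)), add_zero]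
    split_ifs with hfreq
    · rw [cos_rowPhase_sub_rowPhase hne' hfreq, mul_zero, mul_zero, mul_zero]
    · ring

lemma rowAmp_ne_zero {n r : ℕ} (hn : 0 < n) : rowAmp n r ≠ 0 := by
  rw [rowAmp]
  split_ifs <;> positivity

lemma cosWave_eq_smul_Fmat {n : ℕ} (r : Fin n) :
    cosWave n (fourierFreq n ((r + 1) / 2)) (rowPhase r) = (rowAmp n r)⁻¹ • Fmat n r := by
  rw [Fmat_row, inv_smul_smul₀ (rowAmp_ne_zero r.pos)]

lemma cosWave_pi_div_two_eq_zero {n j : ℕ} (hj : j = 0 ∨ j + j = n) :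
    cosWave n (fourierFreq n j) (π / 2) = 0 := by
  ext t
  rcases hj with rfl | hj
  · simp [cosWave, fourierFreq]
  · simp [cosWave_nyquist hj]

lemma exists_cosWave_eq_smul_Fmat {n j : ℕ} (hn : 0 < n) (hj : j ≤ n / 2) {φ : ℝ}
    (hφ : φ = 0 ∨ φ = π / 2) :
    ∃ (r : Fin n) (a : ℝ),
      ((r : ℕ) + 1) / 2 = j ∧ cosWave n (fourierFreq n j) φ = a • Fmat n r := by
  have of_row (r : Fin n) (hr : ((r : ℕ) + 1) / 2 = j) (hrφ : rowPhase r = φ) :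
      ∃ (r : Fin n) (a : ℝ),
        ((r : ℕ) + 1) / 2 = j ∧ cosWave n (fourierFreq n j) φ = a • Fmat n r :=
    ⟨r, (rowAmp n r)⁻¹, hr, by rw [← cosWave_eq_smul_Fmat, hr, hrφ]⟩
  rcases hφ with rfl | rfl
  · exact of_row ⟨2 * j - 1, by omega⟩ (by dsimp only; omega) (if_pos (by dsimp only; omega))
  · by_cases hzero : j = 0 ∨ j + j = n
    · exact ⟨⟨2 * j - 1, by omega⟩, 0, by dsimp only; omega, by
        rw [cosWave_pi_div_two_eq_zero hzero, zero_smul]⟩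
    · exact of_row ⟨2 * j, by omega⟩ (by dsimp only; omega) (if_neg (by dsimp only; omega))

lemma Fmat_dotProduct_diagRPow_filter {n : ℕ} (A : Matrix (Fin n) (Fin n) ℝ) (p : ℝ) (r : Fin n)
    (z : Fin n → ℝ) :
    Fmat n r ⬝ᵥ ((Fmat n)ᵀ * diagRPow n A p * Fmat n) *ᵥ z = A r r ^ p * (Fmat n r ⬝ᵥ z) := by
  change (Fmat n *ᵥ ((Fmat n)ᵀ * diagRPow n A p * Fmat n) *ᵥ z) r = _ * (Fmat n *ᵥ z) r
  rw [mulVec_mulVec, ← Matrix.mul_assoc, ← Matrix.mul_assoc, Fmat_mul_transpose, Matrix.one_mul,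
    ← mulVec_mulVec, diagRPow, mulVec_diagonal]

lemma cosWave_dotProduct_Cmat_filter {n j : ℕ} (hn : 0 < n) (hj : j ≤ n / 2) {φ : ℝ}
    (hφ : φ = 0 ∨ φ = π / 2) (f fp : ℝ → ℝ) (p : ℝ) (z : Fin n → ℝ) :
    cosWave n (fourierFreq n j) φ ⬝ᵥ ((Fmat n)ᵀ * diagRPow n (Cmat n f fp) p * Fmat n) *ᵥ z =
      (f (fourierFreq n j) / fp (fourierFreq n j)) ^ p * (cosWave n (fourierFreq n j) φ ⬝ᵥ z) := by
  obtain ⟨r, a, rfl, hwave⟩ := exists_cosWave_eq_smul_Fmat hn hj hφ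
  rw [hwave, smul_dotProduct, smul_dotProduct, Fmat_dotProduct_diagRPow_filter, Cmat,
    diagonal_apply_eq, smul_eq_mul, smul_eq_mul, mul_left_comm]

lemma periodogram_Cmat_filter {n j : ℕ} (hn : 0 < n) (hj : j ≤ n / 2) {f fp : ℝ → ℝ}
    (hc : 0 ≤ f (fourierFreq n j) / fp (fourierFreq n j)) (z : Fin n → ℝ) :
    periodogram n (fourierFreq n j)
        (((Fmat n)ᵀ * diagRPow n (Cmat n f fp) (1 / 2) * Fmat n) *ᵥ z) =
      f (fourierFreq n j) / fp (fourierFreq n j) * periodogram n (fourierFreq n j) z := by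
  rw [periodogram_eq_sq_add_sq, periodogram_eq_sq_add_sq,
    cosWave_dotProduct_Cmat_filter hn hj (.inl rfl),
    cosWave_dotProduct_Cmat_filter hn hj (.inr rfl), ← Real.sqrt_eq_rpow, mul_pow, mul_pow,
    Real.sq_sqrt hc]
  ring

lemma integral_periodogram_map_Cmat_filter {n j : ℕ} (hn : 0 < n) (hj : j ≤ n / 2)
    {f fp : ℝ → ℝ} (hc : 0 ≤ f (fourierFreq n j) / fp (fourierFreq n j))
    (P : Measure (Fin n → ℝ)) :
    ∫ z, periodogram n (fourierFreq n j) z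
        ∂(P.map fun z => ((Fmat n)ᵀ * diagRPow n (Cmat n f fp) (1 / 2) * Fmat n) *ᵥ z) =
      f (fourierFreq n j) / fp (fourierFreq n j) *
        ∫ z, periodogram n (fourierFreq n j) z ∂P := by
  rw [integral_map (by fun_prop) (continuous_periodogram n _).aestronglyMeasurable]
  simp only [periodogram_Cmat_filter hn hj hc]
  exact integral_const_mul _ _

end FourierMatrix

section Gaussian

open ProbabilityTheory
open scoped MatrixOrder

variable {n : ℕ}

lemma matSqrt_eq_cfcSqrt (S : Matrix (Fin n) (Fin n) ℝ) : matSqrt S = CFC.sqrt S := by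
  by_cases hS : S.PosSemidef
  · rw [matSqrt, dif_pos hS, CFC.sqrt_eq_real_sqrt S hS.nonneg, cfcₙ_eq_cfc, hS.1.cfc_eq]
    rfl
  · rw [matSqrt, dif_neg hS, CFC.sqrt, cfcₙ_apply_of_not_predicate]
    rwa [Matrix.nonneg_iff_posSemidef]

lemma gaussianVec_eq_map_multivariateGaussian (S : Matrix (Fin n) (Fin n) ℝ) :
    gaussianVec n S = (multivariateGaussian 0 S).map WithLp.ofLp := by
  rw [gaussianVec, multivariateGaussian, ← map_pi_eq_stdGaussian,
    Measure.map_map (by fun_prop) (by fun_prop), Measure.map_map (by fun_prop) (by fun_prop),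
    matSqrt_eq_cfcSqrt]
  congr 1
  ext w
  simp

lemma integrable_eval_mul_eval_gaussianVec (S : Matrix (Fin n) (Fin n) ℝ) (s t : Fin n) :
    Integrable (fun z => z s * z t) (gaussianVec n S) := by
  rw [gaussianVec_eq_map_multivariateGaussian,
    integrable_map_measure (by fun_prop) (by fun_prop)]
  have hL2 (i : Fin n) : MemLp (fun x : EuclideanSpace ℝ (Fin n) => x i) 2
      (multivariateGaussian 0 S) :=
    MemLp.eval_piLp IsGaussian.memLp_two_id i
  exact (hL2 s).integrable_mul (hL2 t)

lemma integral_eval_mul_eval_gaussianVec {S : Matrix (Fin n) (Fin n) ℝ} (hS : S.PosSemidef)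
    (s t : Fin n) : ∫ z, z s * z t ∂(gaussianVec n S) = S s t := by
  rw [gaussianVec_eq_map_multivariateGaussian, integral_map (by fun_prop) (by fun_prop),
    ← covariance_eval_multivariateGaussian (μ := 0) hS, covariance]
  have hmean (i : Fin n) : ∫ x : EuclideanSpace ℝ (Fin n), x i ∂(multivariateGaussian 0 S) = 0 := by
    have hproj := (EuclideanSpace.proj (𝕜 := ℝ) i).integral_comp_comm
      (IsGaussian.integrable_fun_id (μ := multivariateGaussian 0 S))
    simpa using hproj
  simp only [hmean, sub_zero]

end Gaussian

section Bias

open scoped Real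

lemma integral_periodogram_gaussianVec {n : ℕ} {S : Matrix (Fin n) (Fin n) ℝ}
    (hS : S.PosSemidef) (lam : ℝ) :
    ∫ z, periodogram n lam z ∂(gaussianVec n S) = 1 / (2 * π * n) *
      ∑ s : Fin n, ∑ t : Fin n, S s t * Real.cos (((s - t : ℤ) : ℝ) * lam) := by
  have hint (s t : Fin n) : Integrable
      (fun z : Fin n → ℝ => z s * z t * Real.cos (((s - t : ℤ) : ℝ) * lam)) (gaussianVec n S) :=
    (integrable_eval_mul_eval_gaussianVec S s t).mul_const _
  simp only [periodogram_eq_sum_cos]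
  rw [integral_const_mul,
    integral_finsetSum _ fun s _ => integrable_finsetSum _ fun t _ => hint s t]
  simp only [integral_finsetSum _ fun t _ => hint _ t, integral_mul_const,
    integral_eval_mul_eval_gaussianVec hS]

lemma abs_integral_periodogram_sub_specDens_le {γ : ℤ → ℝ} (hγ : Summable fun h => |γ h|) {n : ℕ}
    (hn : n ≠ 0) (hpsd : (Toeplitz n γ).PosSemidef) (lam : ℝ) :
    |∫ z, periodogram n lam z ∂(gaussianVec n (Toeplitz n γ)) - specDens γ lam| ≤
      1 / (2 * π) * cesaroTail (fun h => |γ h|) n := by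
  have hfejer := norm_inv_smul_sum_sum_sub_tsum_le hγ (fun h => norm_mul_cos_le (γ h) (h * lam)) hn
  calc |∫ z, periodogram n lam z ∂(gaussianVec n (Toeplitz n γ)) - specDens γ lam|
      = |1 / (2 * π) * ((n : ℝ)⁻¹ • ∑ s : Fin n, ∑ t : Fin n,
          γ ((s : ℤ) - t) * Real.cos (((s - t : ℤ) : ℝ) * lam) -
            ∑' h : ℤ, γ h * Real.cos (h * lam))| := by
        rw [integral_periodogram_gaussianVec hpsd, specDens, mul_sub, smul_eq_mul, ← mul_assoc,
          one_div, one_div, ← mul_inv]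
        rfl
    _ ≤ 1 / (2 * π) * cesaroTail (fun h => |γ h|) n := by
        rw [abs_mul, abs_of_nonneg (by positivity : (0 : ℝ) ≤ 1 / (2 * π))]
        gcongr
        exact hfejer

lemma abs_div_mul_sub_le {a p β M : ℝ} (ha : 0 ≤ a) (haM : a ≤ M) (hβ : 0 < β) (hp : β ≤ p)
    (E : ℝ) : |a / p * E - a| ≤ M / β * |E - p| := by
  have hp0 : 0 < p := hβ.trans_le hp
  calc |a / p * E - a| = a / p * |E - p| := by
        rw [← abs_of_nonneg (div_nonneg ha hp0.le), ← abs_mul, abs_of_nonneg (div_nonneg ha hp0.le),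
          mul_sub, div_mul_cancel₀ a hp0.ne']
    _ ≤ M / β * |E - p| := by
        have hM : 0 ≤ M := ha.trans haM
        gcongr

lemma fourierFreq_mem_Icc {n j : ℕ} (hj : j ≤ n) :
    fourierFreq n j ∈ Set.Icc 0 (2 * π) := by
  rw [fourierFreq, mul_div_assoc]
  exact ⟨by positivity, mul_le_of_le_one_right Real.two_pi_pos.le
    (div_le_one_of_le₀ (Nat.cast_le.2 hj) n.cast_nonneg)⟩

end Bias

/-- under the nonparametrically corrected likelihood (the pushforward of
the Gaussian parametric working model under `z ↦ F_nᵀ C_n^{1/2} F_n z`), the periodogram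
is asymptotically unbiased for `f`, uniformly over Fourier frequencies; moreover the
expected periodogram satisfies the exact multiplicative-correction identity. -/
theorem statement19 (β : ℝ) (hβ : 0 < β) (γp : ℤ → ℝ)
    (hpeven : ∀ h : ℤ, γp (-h) = γp h)
    (hpsum : Summable fun h : ℤ => |γp h|)
    (hpβ : ∀ lam : ℝ, β ≤ specDens γp lam)
    (f : ℝ → ℝ) (hf : ∀ lam ∈ Set.Icc 0 (2 * Real.pi), 0 < f lam)
    (hbdd : ∃ M : ℝ, ∀ lam ∈ Set.Icc 0 (2 * Real.pi), f lam ≤ M) :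
    let Pparam : (n : ℕ) → Measure (Fin n → ℝ) := fun n => gaussianVec n (Toeplitz n γp)
    let PC : (n : ℕ) → Measure (Fin n → ℝ) := fun n =>
      Measure.map
        (fun z => ((Fmat n)ᵀ * diagRPow n (Cmat n f (specDens γp)) (1 / 2) * Fmat n).mulVec z)
        (Pparam n)
    Tendsto (fun n : ℕ =>
        (Finset.range (n / 2 + 1)).sup' Finset.nonempty_range_add_one fun j =>
          |(∫ z, periodogram n (fourierFreq n j) z ∂(PC n)) - f (fourierFreq n j)|)
      atTop (nhds 0) ∧
    ∀ n : ℕ, 1 ≤ n → ∀ j : ℕ, j ≤ n / 2 →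
      (∫ z, periodogram n (fourierFreq n j) z ∂(PC n)) =
        f (fourierFreq n j) / specDens γp (fourierFreq n j) *
          ∫ z, periodogram n (fourierFreq n j) z ∂(Pparam n) := by
  intro Pparam PC
  have hmem {n j : ℕ} (hj : j ≤ n / 2) : fourierFreq n j ∈ Set.Icc 0 (2 * Real.pi) :=
    fourierFreq_mem_Icc (hj.trans (n.div_le_self 2))
  have hident (n : ℕ) (hn : 1 ≤ n) (j : ℕ) (hj : j ≤ n / 2) :=
    integral_periodogram_map_Cmat_filter hn hj
      (div_nonneg (hf _ (hmem hj)).le (hβ.le.trans (hpβ _))) (Pparam n)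
  refine ⟨?_, hident⟩
  obtain ⟨M, hM⟩ := hbdd
  have hlim : Tendsto (fun n => M / β * (1 / (2 * Real.pi) * cesaroTail (fun h => |γp h|) n))
      atTop (nhds 0) := by
    simpa using ((tendsto_cesaroTail hpsum).const_mul (1 / (2 * Real.pi))).const_mul (M / β)
  refine squeeze_zero' (.of_forall fun n => ?_) ?_ hlim
  · exact Finset.le_sup'_of_le _ (Finset.mem_range.2 (n / 2).succ_pos) (abs_nonneg _)
  filter_upwards [eventually_ge_atTop 1] with n hn
  refine Finset.sup'_le _ _ fun j hj => ?_
  replace hj : j ≤ n / 2 := Finset.mem_range_succ_iff.1 hj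
  rw [hident n hn j hj]
  refine (abs_div_mul_sub_le (hf _ (hmem hj)).le (hM _ (hmem hj)) hβ (hpβ _) _).trans ?_
  gcongr
  · exact div_nonneg ((hf _ (hmem hj)).le.trans (hM _ (hmem hj))) hβ.le
  · exact abs_integral_periodogram_sub_specDens_le hpsum (Nat.one_le_iff_ne_zero.1 hn)
      (posSemidef_Toeplitz hpsum hpeven (fun x => hβ.le.trans (hpβ x)) n) _
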